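/- arXiv:1409.1395 — 2 statements merged into one kernel-verified Lean document; each statement's English description precedes it below -/
import Mathlib

section
/- A unital C*-algebra A has no characters if and only if there exist an integer n ≥ 1 and elements a₁, …, aₙ, b₁, …, bₙ in A satisfying Σ_{k=1}^n aₖ* aₖ = 1, bⱼ* aⱼ = 0 and bⱼ* bⱼ = aⱼ* aⱼ for all j = 1, …, n. -/
/-!
Call `(a, b)` an orthogonal pair if `b* a = 0` and `b* b = a* a`. A character kills both entries, so
it kills the cone `C` of finite sums of elements `a* a`; if `1 ∈ C` there is no character.

Conversely, suppose `1 ∉ C`. The elements `x` with `x* x ≤ s` for some `s ∈ C` form a left ideal.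
It is proper: if `1 ≤ s ∈ C`, then `1 = s^(-1/2) s s^(-1/2) ∈ C`. It contains every `z` with
`z ^ 2 = 0`, since `(z, |z|)` is an orthogonal pair. Let `L` be a maximal left ideal above it. For
self-adjoint `h` and real `t`, the product `(h - t)⁺ x (h - t)⁻` squares to zero for all `x`, and
maximality then puts `(h - t)⁺` or `(h - t)⁻` in `L`. As `L` is closed and `ℝ` is connected, both
lie in `L` for a common `t`, so `h ∈ t + L`. Hence `A = ℂ + L`, and such a proper left ideal is the
kernel of a character.
-/

open scoped ComplexStarModule

section Ideal

theorem mem_or_mem_of_mul_eq_zero {R : Type*} [Semiring R] {L : Ideal R} (hL : L.IsMaximal)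
    (hsq : ∀ z : R, z * z = 0 → z ∈ L) {p q : R} (hqp : q * p = 0) : p ∈ L ∨ q ∈ L := by
  refine or_iff_not_imp_right.mpr fun hq ↦ ?_
  obtain ⟨x, l, hl, hxl⟩ := hL.exists_inv hq
  have hpxq : p * (x * q) ∈ L := hsq _ <| by
    calc p * (x * q) * (p * (x * q)) = p * x * (q * p) * (x * q) := by simp only [mul_assoc]
      _ = 0 := by rw [hqp, mul_zero, zero_mul]
  rw [← mul_one p, ← hxl, mul_add]
  exact L.add_mem hpxq (L.mul_mem_left p hl)

theorem nonempty_algHom_of_forall_exists_sub_algebraMap_mem {k A : Type*} [Field k] [Ring A]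
    [Algebra k A] {L : Ideal A} (hL : L ≠ ⊤) (h : ∀ a : A, ∃ c : k, a - algebraMap k A c ∈ L) :
    Nonempty (A →ₐ[k] k) := by
  have : L.IsTwoSided := ⟨fun {l} a hl ↦ by
    obtain ⟨c, hc⟩ := h a
    have hsplit : l * a = l * (a - algebraMap k A c) + algebraMap k A c * l := by
      rw [Algebra.commutes, ← mul_add, sub_add_cancel]
    exact hsplit ▸ L.add_mem (L.mul_mem_left l hc) (L.mul_mem_left _ hl)⟩
  have : Nontrivial (A ⧸ L) := Ideal.Quotient.nontrivial_iff.mpr hL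
  have hbij : Function.Bijective (Algebra.ofId k (A ⧸ L)) := by
    refine ⟨(algebraMap k (A ⧸ L)).injective, fun x ↦ ?_⟩
    obtain ⟨a, rfl⟩ := Ideal.Quotient.mk_surjective x
    obtain ⟨c, hc⟩ := h a
    exact ⟨c, (Ideal.Quotient.eq.mpr hc).symm⟩
  exact ⟨(AlgEquiv.ofBijective _ hbij).symm.toAlgHom.comp (Ideal.Quotient.mkₐ k L)⟩

end Ideal

section MaximalLeftIdeal

theorem continuousOn_posPart_isSelfAdjoint {A : Type*} [NonUnitalCStarAlgebra A] :
    ContinuousOn (fun a : A ↦ a⁺) {a | IsSelfAdjoint a} := by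
  let _ := CStarAlgebra.spectralOrder A
  let _ := CStarAlgebra.spectralOrderedRing A
  have hcont : Continuous fun a : A ↦ (2⁻¹ : ℝ) • (CFC.abs a + a) :=
    (CFC.continuous_abs.add continuous_id).const_smul _
  refine hcont.continuousOn.congr fun a ha ↦ ?_
  dsimp only
  rw [CFC.abs_add_self a ha, ← ofNat_smul_eq_nsmul ℝ 2, inv_smul_smul₀ two_ne_zero]

variable {A : Type*} [CStarAlgebra A] {L : Ideal A}

theorem exists_sub_algebraMap_mem_of_isSelfAdjoint (hL : L.IsMaximal)
    (hsq : ∀ z : A, z * z = 0 → z ∈ L) {h : A} (hh : IsSelfAdjoint h) :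
    ∃ t : ℝ, h - algebraMap ℝ A t ∈ L := by
  let _ := CStarAlgebra.spectralOrder A
  let _ := CStarAlgebra.spectralOrderedRing A
  have hsa (t : ℝ) : IsSelfAdjoint (h - algebraMap ℝ A t) := hh.sub (.algebraMap A (.all t))
  have hpos : Continuous fun t : ℝ ↦ (h - algebraMap ℝ A t)⁺ :=
    continuousOn_posPart_isSelfAdjoint.comp_continuous (by fun_prop) hsa
  have hneg : Continuous fun t : ℝ ↦ (h - algebraMap ℝ A t)⁻ := by
    simp only [← CFC.posPart_neg]
    exact continuousOn_posPart_isSelfAdjoint.comp_continuous (by fun_prop) fun t ↦ (hsa t).neg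
  have hcover (t : ℝ) : (h - algebraMap ℝ A t)⁺ ∈ L ∨ (h - algebraMap ℝ A t)⁻ ∈ L :=
    mem_or_mem_of_mul_eq_zero hL hsq (CFC.negPart_mul_posPart _)
  have hpos_norm : (h - algebraMap ℝ A ‖h‖)⁺ = 0 :=
    (CFC.posPart_eq_zero_iff _ (hsa _)).mpr (sub_nonpos.mpr hh.le_algebraMap_norm_self)
  have hneg_norm : (h - algebraMap ℝ A (-‖h‖))⁻ = 0 := by
    rw [CFC.negPart_eq_zero_iff _ (hsa _), map_neg]
    exact sub_nonneg.mpr hh.neg_algebraMap_norm_le_self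
  have hclosed : IsClosed (L : Set A) := hL.isClosed
  obtain ⟨t, -, htpos, htneg⟩ := isPreconnected_closed_iff.mp isPreconnected_univ _ _
    (hclosed.preimage hpos) (hclosed.preimage hneg) (fun t _ ↦ hcover t)
    ⟨‖h‖, trivial, Set.mem_preimage.mpr (hpos_norm ▸ L.zero_mem)⟩
    ⟨-‖h‖, trivial, Set.mem_preimage.mpr (hneg_norm ▸ L.zero_mem)⟩
  exact ⟨t, CFC.posPart_sub_negPart _ (hsa t) ▸ L.sub_mem htpos htneg⟩

theorem exists_sub_algebraMap_mem (hL : L.IsMaximal) (hsq : ∀ z : A, z * z = 0 → z ∈ L) (a : A) :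
    ∃ c : ℂ, a - algebraMap ℂ A c ∈ L := by
  obtain ⟨s, hs⟩ := exists_sub_algebraMap_mem_of_isSelfAdjoint hL hsq (ℜ a).2
  obtain ⟨t, ht⟩ := exists_sub_algebraMap_mem_of_isSelfAdjoint hL hsq (ℑ a).2
  refine ⟨s + Complex.I * t, ?_⟩
  have hsplit : a - algebraMap ℂ A (s + Complex.I * t) =
      (ℜ a - algebraMap ℝ A s) + algebraMap ℂ A Complex.I * (ℑ a - algebraMap ℝ A t) := by
    nth_rw 1 [← realPart_add_I_smul_imaginaryPart a]
    simp only [map_add, map_mul, Algebra.smul_def, mul_sub, IsScalarTower.algebraMap_apply ℝ ℂ A,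
      Complex.coe_algebraMap]
    abel
  exact hsplit ▸ L.add_mem hs (L.mul_mem_left _ ht)

theorem nonempty_algHom_of_isMaximal (hL : L.IsMaximal) (hsq : ∀ z : A, z * z = 0 → z ∈ L) :
    Nonempty (A →ₐ[ℂ] ℂ) :=
  nonempty_algHom_of_forall_exists_sub_algebraMap_mem hL.ne_top (exists_sub_algebraMap_mem hL hsq)

end MaximalLeftIdeal

/-- `a` and `b` have the same absolute value and orthogonal ranges, expressed algebraically so that
star homomorphisms preserve it. -/
structure IsOrthogonalPair {R : Type*} [Mul R] [Zero R] [Star R] (a b : R) : Prop where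
  star_mul_eq_zero : star b * a = 0
  star_mul_self_eq : star b * b = star a * a

namespace IsOrthogonalPair

theorem map {R S F : Type*} [NonUnitalNonAssocSemiring R] [Star R] [NonUnitalNonAssocSemiring S]
    [Star S] [FunLike F R S] [NonUnitalRingHomClass F R S] [StarHomClass F R S] {a b : R}
    (h : IsOrthogonalPair a b) (f : F) : IsOrthogonalPair (f a) (f b) where
  star_mul_eq_zero := by rw [← map_star, ← map_mul, h.star_mul_eq_zero, map_zero]
  star_mul_self_eq := by simp only [← map_star, ← map_mul, h.star_mul_self_eq]

theorem eq_zero {R : Type*} [NonUnitalNonAssocSemiring R] [NoZeroDivisors R] [StarRing R] {a b : R}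
    (h : IsOrthogonalPair a b) : a = 0 := by
  rcases mul_eq_zero.mp h.star_mul_eq_zero with hb | ha
  · simpa [hb] using h.star_mul_self_eq.symm
  · exact ha

theorem mul_right {R : Type*} [NonUnitalSemiring R] [StarRing R] {a b : R}
    (h : IsOrthogonalPair a b) (c : R) : IsOrthogonalPair (a * c) (b * c) where
  star_mul_eq_zero := by
    rw [star_mul, mul_assoc, ← mul_assoc (star b), h.star_mul_eq_zero, zero_mul, mul_zero]
  star_mul_self_eq := by
    simp only [star_mul, mul_assoc]
    rw [← mul_assoc (star b), h.star_mul_self_eq, mul_assoc]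

theorem of_mul_self_eq_zero {A : Type*} [NonUnitalCStarAlgebra A] [PartialOrder A]
    [StarOrderedRing A] {z : A} (hz : z * z = 0) : IsOrthogonalPair z (CFC.abs z) := by
  have hsa : star (CFC.abs z) = CFC.abs z := (CFC.abs_nonneg z).isSelfAdjoint
  refine ⟨(CStarRing.star_mul_self_eq_zero_iff _).mp ?_, by rw [hsa, CFC.abs_mul_abs]⟩
  calc star (star (CFC.abs z) * z) * (star (CFC.abs z) * z)
      = star z * (CFC.abs z * CFC.abs z) * z := by simp only [star_mul, hsa, mul_assoc]
    _ = star z * star z * (z * z) := by simp only [CFC.abs_mul_abs, mul_assoc]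
    _ = 0 := by rw [hz, mul_zero]

end IsOrthogonalPair

/-- The additive cone generated by the elements `star a * a`, where `a` is the first entry of an
orthogonal pair. -/
def orthogonalPairCone (R : Type*) [NonUnitalSemiring R] [StarRing R] : AddSubmonoid R :=
  AddSubmonoid.closure {x | ∃ a b : R, IsOrthogonalPair a b ∧ star a * a = x}

section Cone

variable {R : Type*} [NonUnitalSemiring R] [StarRing R]

theorem IsOrthogonalPair.star_mul_self_mem_orthogonalPairCone {a b : R} (h : IsOrthogonalPair a b) :
    star a * a ∈ orthogonalPairCone R :=
  AddSubmonoid.subset_closure ⟨a, b, h, rfl⟩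

theorem mem_orthogonalPairCone_iff {x : R} :
    x ∈ orthogonalPairCone R ↔ ∃ n : ℕ, 1 ≤ n ∧ ∃ a b : Fin n → R, ∑ k, star (a k) * a k = x ∧
      (∀ j, star (b j) * a j = 0) ∧ ∀ j, star (b j) * b j = star (a j) * a j := by
  constructor
  · intro hx
    induction hx using AddSubmonoid.closure_induction with
    | mem x hx =>
      obtain ⟨a, b, h, rfl⟩ := hx
      exact ⟨1, le_rfl, fun _ ↦ a, fun _ ↦ b, by simp, fun _ ↦ h.1, fun _ ↦ h.2⟩
    | zero => exact ⟨1, le_rfl, 0, 0, by simp⟩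
    | add x y _ _ hx hy =>
      obtain ⟨m, hm, a, b, rfl, hba, hbb⟩ := hx
      obtain ⟨n, -, c, d, rfl, hdc, hdd⟩ := hy
      refine ⟨m + n, by lia, Fin.append a c, Fin.append b d, ?_, ?_, ?_⟩
      · simp [Fin.sum_univ_add]
      · exact Fin.addCases (by simpa using hba) (by simpa using hdc)
      · exact Fin.addCases (by simpa using hbb) (by simpa using hdd)
  · rintro ⟨n, -, a, b, rfl, hba, hbb⟩
    exact sum_mem fun j _ ↦ IsOrthogonalPair.star_mul_self_mem_orthogonalPairCone ⟨hba j, hbb j⟩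

theorem star_mul_mul_mem_orthogonalPairCone {x : R} (hx : x ∈ orthogonalPairCone R) (c : R) :
    star c * x * c ∈ orthogonalPairCone R := by
  induction hx using AddSubmonoid.closure_induction with
  | mem x hx =>
    obtain ⟨a, b, h, rfl⟩ := hx
    simpa only [star_mul, mul_assoc] using (h.mul_right c).star_mul_self_mem_orthogonalPairCone
  | zero => simp
  | add x y _ _ hx hy => simpa only [mul_add, add_mul] using add_mem hx hy

theorem map_eq_zero_of_mem_orthogonalPairCone {S F : Type*} [NonUnitalNonAssocSemiring S]
    [NoZeroDivisors S] [StarRing S] [FunLike F R S] [NonUnitalRingHomClass F R S]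
    [StarHomClass F R S] (f : F) {x : R} (hx : x ∈ orthogonalPairCone R) : f x = 0 := by
  induction hx using AddSubmonoid.closure_induction with
  | mem x hx =>
    obtain ⟨a, b, h, rfl⟩ := hx
    rw [map_mul, (h.map f).eq_zero, mul_zero]
  | zero => exact map_zero f
  | add x y _ _ hx hy => rw [map_add, hx, hy, add_zero]

end Cone

theorem star_add_mul_self_le {R : Type*} [NonUnitalRing R] [PartialOrder R] [StarRing R]
    [StarOrderedRing R] (x y : R) :
    star (x + y) * (x + y) ≤ 2 • (star x * x + star y * y) := by
  calc star (x + y) * (x + y)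
      ≤ star (x + y) * (x + y) + star (x - y) * (x - y) :=
        le_add_of_nonneg_right (star_mul_self_nonneg _)
    _ = 2 • (star x * x + star y * y) := by
        simp only [star_add, star_sub, add_mul, sub_mul, mul_add, mul_sub]
        abel

section Order

variable {A : Type*} [CStarAlgebra A] [PartialOrder A] [StarOrderedRing A]

theorem exists_star_mul_mul_self_le_nsmul (x : A) :
    ∃ n : ℕ, ∀ y : A, star (x * y) * (x * y) ≤ n • (star y * y) := by
  obtain ⟨n, hn⟩ := exists_nat_ge (‖x‖ ^ 2)
  have hx : star x * x ≤ algebraMap ℝ A n :=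
    CStarAlgebra.star_mul_le_algebraMap_norm_sq.trans (algebraMap_mono A hn)
  refine ⟨n, fun y ↦ ?_⟩
  calc star (x * y) * (x * y) = star y * (star x * x) * y := by simp only [star_mul, mul_assoc]
    _ ≤ star y * algebraMap ℝ A n * y := star_left_conjugate_le_conjugate hx y
    _ = n • (star y * y) := by
      rw [map_natCast, ← (Nat.cast_commute n _).eq, mul_assoc, nsmul_eq_mul]

/-- The left ideal of elements `x` such that `star x * x` is dominated by an element of the additive
cone `C`. -/
def dominatedIdeal (C : AddSubmonoid A) : Ideal A where
  carrier := {x | ∃ s ∈ C, star x * x ≤ s}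
  zero_mem' := ⟨0, zero_mem C, by simp⟩
  add_mem' := by
    rintro x y ⟨s, hs, hxs⟩ ⟨t, ht, hyt⟩
    exact ⟨2 • (s + t), nsmul_mem (add_mem hs ht) 2,
      (star_add_mul_self_le x y).trans (nsmul_le_nsmul_right (add_le_add hxs hyt) 2)⟩
  smul_mem' := by
    rintro x y ⟨s, hs, hys⟩
    obtain ⟨n, hn⟩ := exists_star_mul_mul_self_le_nsmul x
    exact ⟨n • s, nsmul_mem hs n, (hn y).trans (nsmul_le_nsmul_right hys n)⟩

theorem one_mem_orthogonalPairCone_of_one_le {s : A} (hs : s ∈ orthogonalPairCone A)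
    (h : 1 ≤ s) : 1 ∈ orthogonalPairCone A := by
  have hpos : IsStrictlyPositive s := .of_le isStrictlyPositive_one h
  have hsa : star (s ^ (-(1 / 2) : ℝ)) = s ^ (-(1 / 2) : ℝ) := CFC.rpow_nonneg.isSelfAdjoint
  have hconj := star_mul_mul_mem_orthogonalPairCone hs (s ^ (-(1 / 2) : ℝ))
  rwa [hsa, CFC.conjugate_rpow_neg_one_half s hpos] at hconj

theorem dominatedIdeal_orthogonalPairCone_ne_top (h : (1 : A) ∉ orthogonalPairCone A) :
    dominatedIdeal (orthogonalPairCone A) ≠ ⊤ := by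
  rw [Ideal.ne_top_iff_one]
  rintro ⟨s, hs, h1s⟩
  exact h (one_mem_orthogonalPairCone_of_one_le hs (by simpa using h1s))

theorem mem_dominatedIdeal_orthogonalPairCone_of_mul_self_eq_zero {z : A} (hz : z * z = 0) :
    z ∈ dominatedIdeal (orthogonalPairCone A) :=
  ⟨_, (IsOrthogonalPair.of_mul_self_eq_zero hz).star_mul_self_mem_orthogonalPairCone, le_rfl⟩

end Order

theorem isEmpty_algHom_iff_one_mem_orthogonalPairCone {A : Type*} [CStarAlgebra A] :
    IsEmpty (A →ₐ[ℂ] ℂ) ↔ (1 : A) ∈ orthogonalPairCone A := by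
  let _ := CStarAlgebra.spectralOrder A
  let _ := CStarAlgebra.spectralOrderedRing A
  constructor
  · contrapose!
    intro h1
    obtain ⟨L, hL, hle⟩ := Ideal.exists_le_maximal _ (dominatedIdeal_orthogonalPairCone_ne_top h1)
    exact nonempty_algHom_of_isMaximal hL fun z hz ↦
      hle (mem_dominatedIdeal_orthogonalPairCone_of_mul_self_eq_zero hz)
  · refine fun h1 ↦ ⟨fun χ ↦ one_ne_zero (α := ℂ) ?_⟩
    rw [← map_one χ, map_eq_zero_of_mem_orthogonalPairCone χ h1]

/-- A unital C*-algebra `A` has no characters (a character being a unital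
algebra homomorphism `A → ℂ`) if and only if there exist an integer `n ≥ 1` and elements
`a₁, …, aₙ, b₁, …, bₙ` in `A` satisfying `∑ₖ aₖ* aₖ = 1`, `bⱼ* aⱼ = 0` and
`bⱼ* bⱼ = aⱼ* aⱼ` for all `j = 1, …, n`. -/
theorem no_characters_iff_relations (A : Type*) [CStarAlgebra A] :
    IsEmpty (A →ₐ[ℂ] ℂ) ↔
      ∃ (n : ℕ), 1 ≤ n ∧ ∃ a b : Fin n → A,
        (∑ k, star (a k) * a k = 1) ∧
        (∀ j, star (b j) * a j = 0) ∧
        (∀ j, star (b j) * b j = star (a j) * a j) :=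
  isEmpty_algHom_iff_one_mem_orthogonalPairCone.trans mem_orthogonalPairCone_iff
end

section
/- Let A and B be unital C*-algebras, let π : A → B be a surjective unital star-algebra homomorphism, let k ≥ 2 be an integer, and let b₀, b₁, …, b_k be positive contractions in B such that b₁, …, b_k are pairwise orthogonal (bᵢbⱼ = 0 for i ≠ j) and pairwise equivalent, b₀ + b₁ + ⋯ + b_k = 1_B, and b₀ = t (b₁ − 1/2)₊ t* for some t ∈ B. Then there exist positive contractions a₀, a₁, …, a_k in A such that a₁, …, a_k are pairwise orthogonal and pairwise equivalent, a₀ ≾ (a₁ − 1/2)₊, and π(aⱼ) = bⱼ for j = 0, 1, …, k. -/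
/-- `a` is Cuntz subequivalent to `b` (`a ≾ b`): there is a sequence `(xₙ)` with
`‖xₙ* b xₙ - a‖ → 0`; equivalently, for each `ε > 0` there is `x` with
`‖x* b x - a‖ < ε`. -/
def CuntzSub {A : Type*} [CStarAlgebra A] (a b : A) : Prop :=
  ∀ ε : ℝ, 0 < ε → ∃ x : A, ‖star x * b * x - a‖ < ε

/-!
Let `z i` in `B` have orthogonal ranges and satisfy `star (z i) * z i = r ^ 2` with one `r ≥ 0`.
Orthogonal positive elements lift to orthogonal positive elements, so take such lifts `α i` of
`z i * star (z i)` and any lifts `T i` of `z i`. Every `star (T i) * α i * T i` lifts `r ^ 4`, and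
their product `P` contains each of them: `P = Y i * (star (T i) * α i * T i) * Q i`. With
`p i = α i * T i * Q i`, the elements `w i = |star (p i)| * T i * star (Y i)` satisfy
`star (w i) * w i = P * star P` for every `i`, and their ranges are orthogonal because those of the
`α i` are. Over `B` the element `w i` becomes `z i * r ^ n` for a fixed `n`, and polar decomposition
writes any given system of elements implementing the equivalences of the `b i` in this form.

The element over `b 0` is obtained by lifting `t`, which makes the Cuntz subequivalence automatic,
and multiplying by a lift of `1` that restores the norm bound.
-/

open Filter Topology

theorem mul_star_self_sq_eq_star_mul_self {R : Type*} [Monoid R] [StarMul R] {v w : R}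
    (h : star v * v = star w * w) : (w * star w) ^ 2 = star (v * star w) * (v * star w) := by
  rw [star_mul, star_star, mul_assoc, ← mul_assoc (star v), h, sq]
  simp only [mul_assoc]

section StarRing

variable {R : Type*} [NonUnitalSemiring R] [StarRing R]

theorem star_mul_eq_zero_of_dvd {p q a b : R} (h : star p * q = 0) (ha : p ∣ a) (hb : q ∣ b) :
    star a * b = 0 := by
  obtain ⟨y, rfl⟩ := ha
  obtain ⟨z, rfl⟩ := hb
  rw [star_mul, mul_assoc, ← mul_assoc (star p), h, zero_mul, mul_zero]

theorem pairwise_insert_star_mul_eq_zero {ι : Type*} {s : Set ι} {i : ι} (hi : i ∉ s) {u : ι → R}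
    (hs : s.Pairwise fun j l ↦ star (u j) * u l = 0) {p q : R} (hpq : star p * q = 0)
    (hp : p ∣ u i) (hq : ∀ j ∈ s, q ∣ u j) :
    (insert i s).Pairwise fun j l ↦ star (u j) * u l = 0 := by
  have hqp : star q * p = 0 := by simpa using congrArg star hpq
  exact (Set.pairwise_insert_of_notMem hi).mpr ⟨hs, fun j hj ↦
    ⟨star_mul_eq_zero_of_dvd hpq hp (hq j hj), star_mul_eq_zero_of_dvd hqp (hq j hj) hp⟩⟩

end StarRing

theorem sum_pow_succ_mul {ι R : Type*} [Semiring R] {s : Finset ι} {c : ι → R}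
    (hc : (s : Set ι).Pairwise fun i j ↦ c i * c j = 0) {j : ι} (hj : j ∈ s) (n : ℕ) :
    (∑ i ∈ s, c i ^ (n + 1)) * c j = c j ^ (n + 2) := by
  rw [Finset.sum_mul, Finset.sum_eq_single_of_mem j hj, ← pow_succ]
  intro i hi hij
  rw [pow_succ, mul_assoc, hc hi hj hij, mul_zero]

theorem mul_mul_self_eq_pow {R : Type*} [Monoid R] [StarMul R] {a c : R} (ha : IsSelfAdjoint a)
    (hc : IsSelfAdjoint c) {m : ℕ} (h : a * c = c ^ (m + 1)) : a * c * a = c ^ (2 * m + 1) := by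
  have hca : c * a = c ^ (m + 1) := by
    simpa only [star_mul, star_pow, ha.star_eq, hc.star_eq] using congrArg star h
  rw [h, pow_succ, mul_assoc, hca, ← pow_add]
  congr 1
  ring

theorem exists_prod_eq_mul_mul {ι M N : Type*} [Fintype ι] [Monoid M] [Monoid N] (φ : M →* N)
    {g : ι → M} {e : N} (hg : ∀ i, φ (g i) = e) :
    ∃ P : M, ∀ i, ∃ (Y Q : M) (m n : ℕ), P = Y * g i * Q ∧ φ Y = e ^ m ∧ φ Q = e ^ n ∧
      m + n + 1 = Fintype.card ι := by
  have map_prod (l : List ι) : φ (l.map g).prod = e ^ l.length := by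
    simp [map_list_prod, Function.comp_def, hg]
  refine ⟨(Finset.univ.toList.map g).prod, fun i ↦ ?_⟩
  obtain ⟨l₁, l₂, hl⟩ := List.append_of_mem (Finset.mem_toList.mpr (Finset.mem_univ i))
  refine ⟨(l₁.map g).prod, (l₂.map g).prod, l₁.length, l₂.length, ?_, map_prod l₁, map_prod l₂, ?_⟩
  · simp [hl, mul_assoc]
  · simpa [add_assoc] using (congrArg List.length hl).symm

section CStarAlgebra

variable {A B : Type*} [CStarAlgebra A] [CStarAlgebra B]

theorem cuntzSub_conjugate (y b : A) : CuntzSub (y * b * star y) b :=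
  fun ε hε ↦ ⟨star y, by simpa using hε⟩

theorem norm_mul_eq_of_star_mul_self_eq {x s : A} (h : star x * x = star s * s) (y : A) :
    ‖x * y‖ = ‖s * y‖ := by
  have hxs : star (x * y) * (x * y) = star (s * y) * (s * y) := by
    simpa only [star_mul, mul_assoc] using congrArg (fun b ↦ star y * b * y) h
  rw [← mul_self_inj (norm_nonneg _) (norm_nonneg _), ← CStarRing.norm_star_mul_self, hxs,
    CStarRing.norm_star_mul_self]

-- `w` is `v * c`, where `v` is the partial isometry of the polar decomposition of `x` along `s`;
-- `v` itself need not lie in the algebra.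
theorem exists_star_mul_self_eq_of_mem_closure {x s c : A} (h : star x * x = star s * s)
    (hc : c ∈ closure (Set.range (s * ·))) :
    ∃ w : A, star w * w = star c * c ∧ (∀ d, c * d = s → w * d = x) ∧
      ∀ y, y * x = 0 → y * w = 0 := by
  obtain ⟨_, hrange, hsc⟩ := mem_closure_iff_seq_limit.mp hc
  choose y hy using hrange
  obtain rfl : (fun n ↦ s * y n) = _ := funext hy
  have hcauchy : CauchySeq fun n ↦ x * y n := by
    have hdist (m n : ℕ) : dist (x * y m) (x * y n) = dist (s * y m) (s * y n) := by
      simp only [dist_eq_norm, ← mul_sub, norm_mul_eq_of_star_mul_self_eq h]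
    simpa only [Metric.cauchySeq_iff, hdist] using hsc.cauchySeq
  obtain ⟨w, hxw⟩ := cauchySeq_tendsto_of_complete hcauchy
  refine ⟨w, ?_, fun d hd ↦ ?_, fun a ha ↦ ?_⟩
  · refine tendsto_nhds_unique (hxw.star.mul hxw) ((hsc.star.mul hsc).congr fun n ↦ ?_)
    simpa only [star_mul, mul_assoc] using congrArg (fun b ↦ star (y n) * b * y n) h.symm
  · have hsd : Tendsto (fun n ↦ ‖s * (y n * d - 1)‖) atTop (𝓝 0) := by
      simpa [mul_sub, mul_assoc, hd] using ((hsc.mul_const d).sub_const s).norm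
    refine tendsto_nhds_unique (hxw.mul_const d) (tendsto_iff_norm_sub_tendsto_zero.mpr ?_)
    refine hsd.congr fun n ↦ ?_
    rw [← norm_mul_eq_of_star_mul_self_eq h, mul_sub, mul_one, mul_assoc]
  · refine tendsto_nhds_unique (hxw.const_mul a) ?_
    simp [← mul_assoc, ha]

theorem posPart_sq {a : A} (ha : IsSelfAdjoint a) : a⁺ ^ 2 = a * a⁺ :=
  calc a⁺ ^ 2 = (a⁺ - a⁻) * a⁺ := by rw [sub_mul, CFC.negPart_mul_posPart, sub_zero, sq]
    _ = a * a⁺ := by rw [CFC.posPart_sub_negPart a]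

theorem negPart_sq {a : A} (ha : IsSelfAdjoint a) : a⁻ ^ 2 = a * -a⁻ :=
  calc a⁻ ^ 2 = (a⁺ - a⁻) * -a⁻ := by
        rw [mul_neg, sub_mul, CFC.posPart_mul_negPart, zero_sub, neg_neg, sq]
    _ = a * -a⁻ := by rw [CFC.posPart_sub_negPart a]

theorem exists_isSelfAdjoint_lift {π : A →⋆ₐ[ℂ] B} (hπ : Function.Surjective π) {b : B}
    (hb : IsSelfAdjoint b) : ∃ a : A, IsSelfAdjoint a ∧ π a = b := by
  obtain ⟨a, rfl⟩ := hπ b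
  exact ⟨realPart a, (realPart a).2, by rw [map_realPart, hb.coe_realPart]⟩

theorem star_mul_eq_zero_of_mul_star_mul_mul_star_eq_zero {x y : A}
    (h : x * star x * (y * star y) = 0) : star x * y = 0 := by
  have hxy : x * star x * y = 0 := by
    rw [← CStarRing.mul_star_self_eq_zero_iff, star_mul, ← mul_assoc, mul_assoc _ y, h, zero_mul]
  rw [← CStarRing.star_mul_self_eq_zero_iff, star_mul, star_star, mul_assoc, ← mul_assoc x, hxy,
    mul_zero]

theorem cfc_mul_self_mul_cfc {f : ℝ → ℝ} (hf : Continuous f) {a : A} (ha : IsSelfAdjoint a) :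
    cfc f a * a * cfc f a = cfc (fun t ↦ f t * t * f t) a := by
  rw [cfc_mul (fun t ↦ f t * t) f a (by fun_prop) (by fun_prop),
    cfc_mul f (fun t ↦ t) a (by fun_prop) (by fun_prop), cfc_id' ℝ a]

theorem sub_pow_mul_cfc {r : A} (hr : IsSelfAdjoint r) {f : ℝ → ℝ} (hf : Continuous f) (n : ℕ) :
    r - r ^ n * cfc f r = cfc (fun t ↦ t - t ^ n * f t) r := by
  rw [cfc_sub (fun t ↦ t) (fun t ↦ t ^ n * f t) r (by fun_prop) (by fun_prop),
    cfc_mul (fun t ↦ t ^ n) f r (by fun_prop) (by fun_prop), cfc_pow_id r n, cfc_id' ℝ r]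

variable [PartialOrder A] [StarOrderedRing A] [PartialOrder B] [StarOrderedRing B]

theorem exists_nonneg_pow_eq {a : A} (ha : 0 ≤ a) {n : ℕ} (hn : n ≠ 0) :
    ∃ r : A, 0 ≤ r ∧ r ^ n = a := by
  refine ⟨a ^ (n⁻¹ : ℝ), CFC.rpow_nonneg, ?_⟩
  rw [← CFC.rpow_natCast _ n CFC.rpow_nonneg,
    CFC.rpow_rpow_of_exponent_nonneg a _ _ (by positivity) (by positivity),
    inv_mul_cancel₀ (by exact_mod_cast hn), CFC.rpow_one a]

theorem eq_of_pow_eq_pow_of_nonneg {a b : A} (ha : 0 ≤ a) (hb : 0 ≤ b) {n : ℕ} (hn : n ≠ 0)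
    (h : a ^ n = b ^ n) : a = b := by
  have hroot {c : A} (hc : 0 ≤ c) : (c ^ n) ^ (n⁻¹ : ℝ) = c := by
    rw [← CFC.rpow_natCast c n,
      CFC.rpow_rpow_of_exponent_nonneg c _ _ (by positivity) (by positivity),
      mul_inv_cancel₀ (by exact_mod_cast hn), CFC.rpow_one c]
  rw [← hroot ha, h, hroot hb]

theorem mul_pow_div_pow_add_pow_le {t δ : ℝ} (ht : 0 ≤ t) (hδ : 0 < δ) (n : ℕ) :
    t * δ ^ (n + 1) / (t ^ (n + 1) + δ ^ (n + 1)) ≤ δ := by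
  rw [div_le_iff₀ (by positivity)]
  obtain htδ | hδt := le_total t δ
  · nlinarith [mul_le_mul_of_nonneg_right htδ (pow_nonneg hδ.le (n + 1)),
      mul_nonneg hδ.le (pow_nonneg ht (n + 1))]
  · have hpow : t * δ ^ (n + 1) ≤ δ * t ^ (n + 1) := by
      have := mul_le_mul_of_nonneg_left (pow_le_pow_left₀ hδ.le hδt n) (mul_nonneg hδ.le ht)
      linear_combination this
    linarith [mul_nonneg hδ.le (pow_nonneg hδ.le (n + 1))]

theorem mem_closure_range_pow_succ_mul {r : A} (hr : 0 ≤ r) (n : ℕ) :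
    r ∈ closure (Set.range (r ^ (n + 1) * ·)) := by
  refine Metric.mem_closure_range_iff.mpr fun ε hε ↦ ?_
  obtain ⟨δ, hδ, hδε⟩ := exists_between hε
  have hden (t : ℝ) : |t| ^ (n + 1) + δ ^ (n + 1) ≠ 0 := by positivity
  obtain ⟨f, hf⟩ : ∃ f : ℝ → ℝ, f = fun t ↦ t * (|t| ^ (n + 1) + δ ^ (n + 1))⁻¹ := ⟨_, rfl⟩
  have hfc : Continuous f := by
    rw [hf]
    fun_prop (disch := assumption)
  refine ⟨cfc f r, ?_⟩
  rw [dist_eq_norm, sub_pow_mul_cfc (.of_nonneg hr) hfc]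
  refine (norm_cfc_le hδ.le fun t ht ↦ ?_).trans_lt hδε
  have ht0 : 0 ≤ t := spectrum_nonneg_of_nonneg hr ht
  have heq : t - t ^ (n + 1) * f t = t * δ ^ (n + 1) / (t ^ (n + 1) + δ ^ (n + 1)) := by
    simp only [hf, abs_of_nonneg ht0]
    field_simp
    ring
  rw [heq, Real.norm_of_nonneg (by positivity)]
  exact mul_pow_div_pow_add_pow_le ht0 hδ n

theorem exists_eq_mul_pow {x r : A} (hr : 0 ≤ r) {n : ℕ} (h : star x * x = r ^ (2 * n + 2)) :
    ∃ u : A, star u * u = r ^ 2 ∧ u * r ^ n = x ∧ ∀ y, y * x = 0 → y * u = 0 := by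
  have hrsa : star r = r := (IsSelfAdjoint.of_nonneg hr).star_eq
  have hxr : star x * x = star (r ^ (n + 1)) * r ^ (n + 1) := by
    rw [h, star_pow, hrsa, ← pow_add]
    congr 1
    ring
  obtain ⟨u, huu, hux, hyu⟩ :=
    exists_star_mul_self_eq_of_mem_closure hxr (mem_closure_range_pow_succ_mul hr n)
  exact ⟨u, by rw [huu, hrsa, sq], hux _ (pow_succ' r n).symm, hyu⟩

theorem exists_orthogonal_eq_mul_pow {ι : Type*} {x : ι → A} {r : A} (hr : 0 ≤ r) {n : ℕ}
    (h : ∀ i, star (x i) * x i = r ^ (2 * n + 2))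
    (horth : Pairwise fun i j ↦ star (x i) * x j = 0) :
    ∃ u : ι → A, (∀ i, star (u i) * u i = r ^ 2) ∧ (Pairwise fun i j ↦ star (u i) * u j = 0) ∧
      ∀ i, u i * r ^ n = x i := by
  choose u huu hux hvanish using fun i ↦ exists_eq_mul_pow hr (h i)
  refine ⟨u, huu, fun i j hij ↦ ?_, hux⟩
  have hux_orth : star (u j) * x i = 0 := by simpa using congrArg star (hvanish j _ (horth hij))
  simpa using congrArg star (hvanish i _ hux_orth)

theorem mul_eq_zero_of_mul_pow_eq_zero {y r : A} (hr : 0 ≤ r) {n : ℕ} (h : y * r ^ n = 0) :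
    y * r = 0 := by
  have hmem : r ∈ closure (Set.range (r ^ (n + 1) * ·)) := mem_closure_range_pow_succ_mul hr n
  have hclosed : IsClosed {c : A | y * c = 0} := isClosed_eq (by fun_prop) (by fun_prop)
  refine closure_minimal ?_ hclosed hmem
  rintro _ ⟨c, rfl⟩
  simp [pow_succ, ← mul_assoc, h]

theorem mul_eq_zero_of_pow_mul_pow_eq_zero {a b : A} (ha : 0 ≤ a) (hb : 0 ≤ b) {m n : ℕ}
    (h : a ^ m * b ^ n = 0) : a * b = 0 := by
  have hsa : star a = a := (IsSelfAdjoint.of_nonneg ha).star_eq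
  have hsb : star b = b := (IsSelfAdjoint.of_nonneg hb).star_eq
  have hba : b * a ^ m = 0 := by
    simpa [hsa, hsb] using congrArg star (mul_eq_zero_of_mul_pow_eq_zero hb h)
  simpa [hsa, hsb] using congrArg star (mul_eq_zero_of_mul_pow_eq_zero ha hba)

theorem abs_star_mul_abs_star_eq_zero {a b : A} (h : star a * b = 0) :
    CFC.abs (star a) * CFC.abs (star b) = 0 := by
  have habs (c : A) : star (CFC.abs (star c)) = CFC.abs (star c) :=
    (IsSelfAdjoint.of_nonneg (CFC.abs_nonneg _)).star_eq
  have hab : CFC.abs (star a) * b = 0 := by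
    rw [← CStarRing.star_mul_self_eq_zero_iff, star_mul, habs, mul_assoc,
      ← mul_assoc (CFC.abs _), CFC.abs_mul_abs, star_star, mul_assoc, h, mul_zero, mul_zero]
  rw [← CStarRing.mul_star_self_eq_zero_iff, star_mul, habs, habs, mul_assoc,
    ← mul_assoc (CFC.abs (star b)), CFC.abs_mul_abs, star_star, mul_assoc b, ← mul_assoc, hab,
    zero_mul]

theorem star_mul_self_abs_star_mul_star (p v : A) :
    star (CFC.abs (star p) * star v) * (CFC.abs (star p) * star v) = v * p * star (v * p) := by
  have habs : star (CFC.abs (star p)) = CFC.abs (star p) :=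
    (IsSelfAdjoint.of_nonneg (CFC.abs_nonneg _)).star_eq
  rw [star_mul, star_star, habs, mul_assoc, ← mul_assoc (CFC.abs _), CFC.abs_mul_abs, star_star,
    star_mul]
  simp only [mul_assoc]

theorem abs_star_mul_pow_succ {z r : A} (hr : 0 ≤ r) (hz : star z * z = r ^ 2) (n : ℕ) :
    CFC.abs (star (z * r ^ (n + 1))) = z * r ^ n * star z := by
  have hrsa : star r = r := (IsSelfAdjoint.of_nonneg hr).star_eq
  refine CFC.sqrt_unique ?_ (star_right_conjugate_nonneg (CStarAlgebra.pow_nonneg hr n) z)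
  calc z * r ^ n * star z * (z * r ^ n * star z) = z * (r ^ n * (star z * z) * r ^ n) * star z := by
        simp only [mul_assoc]
    _ = z * (r ^ (n + 1) * r ^ (n + 1)) * star z := by
        rw [hz, ← pow_add, ← pow_add, ← pow_add]
        congr 3
        ring
    _ = star (star (z * r ^ (n + 1))) * star (z * r ^ (n + 1)) := by
        simp only [star_mul, star_star, star_pow, hrsa, mul_assoc]

variable {π : A →⋆ₐ[ℂ] B}

theorem exists_norm_conjugate_le_one {a : A} (ha : 0 ≤ a) (h : ‖π a‖ ≤ 1) :
    ∃ d : A, IsSelfAdjoint d ∧ π d = 1 ∧ ‖d * a * d‖ ≤ 1 := by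
  have hsa : IsSelfAdjoint a := .of_nonneg ha
  obtain ⟨f, hf⟩ : ∃ f : ℝ → ℝ, f = fun t ↦ (√(max t 1))⁻¹ := ⟨_, rfl⟩
  have hfc : Continuous f := by
    have (t : ℝ) : √(max t 1) ≠ 0 := by positivity
    rw [hf]
    fun_prop (disch := assumption)
  refine ⟨cfc f a, cfc_predicate f a, ?_, ?_⟩
  · rw [StarAlgHomClass.map_cfc π f a hfc.continuousOn (map_continuous π) hsa (hsa.map π),
      ← cfc_one ℝ (π a) (hsa.map π)]
    refine cfc_congr fun t ht ↦ ?_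
    obtain _ | _ := subsingleton_or_nontrivial B
    · simp at ht
    · have ht1 : t ≤ 1 := (le_abs_self t).trans ((spectrum.norm_le_norm_of_mem ht).trans h)
      simp [hf, ht1]
  · rw [cfc_mul_self_mul_cfc hfc hsa]
    refine norm_cfc_le zero_le_one fun t ht ↦ ?_
    have ht0 : 0 ≤ t := spectrum_nonneg_of_nonneg ha ht
    have heq : f t * t * f t = t / max t 1 := by
      have hsq : √(max t 1) * √(max t 1) = max t 1 := Real.mul_self_sqrt (by positivity)
      rw [hf, ← hsq]
      field_simp
    rw [heq, Real.norm_of_nonneg (by positivity)]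
    exact div_le_one_of_le₀ (le_max_left _ _) (by positivity)

theorem exists_lift_conjugate (hπ : Function.Surjective π) {p : A} (hp : 0 ≤ p)
    {t : B} (ht : ‖t * π p * star t‖ ≤ 1) :
    ∃ y : A, π (y * p * star y) = t * π p * star t ∧ ‖y * p * star y‖ ≤ 1 := by
  obtain ⟨T, rfl⟩ := hπ t
  obtain ⟨d, hd, hπd, hle⟩ := exists_norm_conjugate_le_one (π := π)
    (star_right_conjugate_nonneg hp T) (by simpa only [map_mul, map_star] using ht)
  refine ⟨d * T, by simp only [map_mul, map_star, hπd, one_mul], ?_⟩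
  simpa only [star_mul, hd.star_eq, mul_assoc] using hle

theorem map_cstarAbs (a : A) : π (CFC.abs a) = CFC.abs (π a) := by
  refine (CFC.sqrt_unique ?_ (map_nonneg π (CFC.abs_nonneg a))).symm
  rw [← map_mul, CFC.abs_mul_abs, map_mul, map_star]

theorem map_posPart_and_map_negPart {a : A} (ha : IsSelfAdjoint a) :
    π a⁺ = (π a)⁺ ∧ π a⁻ = (π a)⁻ := by
  have h := CFC.posPart_negPart_unique (a := π a) (b := π a⁺) (c := π a⁻)
    (by rw [← map_sub, CFC.posPart_sub_negPart a])
    (by rw [← map_mul, CFC.posPart_mul_negPart, map_zero])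
    (map_nonneg π (CFC.posPart_nonneg a)) (map_nonneg π (CFC.negPart_nonneg a))
  exact ⟨h.1.symm, h.2.symm⟩

theorem exists_mul_eq_zero_lift_sq (hπ : Function.Surjective π) {R : A} (hR : IsSelfAdjoint R)
    {x y : B} (hx : 0 ≤ x) (hy : 0 ≤ y)
    (hxy : π R * x * π R * (π R * y * π R) = 0) :
    ∃ p q : A, IsSelfAdjoint p ∧ IsSelfAdjoint q ∧ p * q = 0 ∧ R ∣ p ∧ R ∣ q ∧
      π p = (π R * x * π R) ^ 2 ∧ π q = (π R * y * π R) ^ 2 := by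
  obtain ⟨L, hL, hLxy⟩ :=
    exists_isSelfAdjoint_lift hπ ((IsSelfAdjoint.of_nonneg hx).sub (.of_nonneg hy))
  have hsa : IsSelfAdjoint (R * L * R) := by simpa only [hR.star_eq] using hL.conjugate R
  have hπR : IsSelfAdjoint (π R) := hR.map π
  have hparts := CFC.posPart_negPart_unique (a := π (R * L * R))
    (by rw [map_mul, map_mul, hLxy, mul_sub, sub_mul]) hxy
    (hπR.conjugate_nonneg hx) (hπR.conjugate_nonneg hy)
  obtain ⟨hpos, hneg⟩ := map_posPart_and_map_negPart (π := π) hsa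
  refine ⟨(R * L * R)⁺ ^ 2, (R * L * R)⁻ ^ 2,
    (IsSelfAdjoint.of_nonneg (CFC.posPart_nonneg _)).pow 2,
    (IsSelfAdjoint.of_nonneg (CFC.negPart_nonneg _)).pow 2, ?_, ?_, ?_, ?_, ?_⟩
  · rw [sq, sq, mul_assoc, ← mul_assoc _ _ (R * L * R)⁻, CFC.posPart_mul_negPart, zero_mul,
      mul_zero]
  · exact posPart_sq hsa ▸ ((dvd_mul_right R L).mul_right R).mul_right _
  · exact negPart_sq hsa ▸ ((dvd_mul_right R L).mul_right R).mul_right _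
  · rw [map_pow, hpos, hparts.1]
  · rw [map_pow, hneg, hparts.2]

theorem exists_lift_split_insert (hπ : Function.Surjective π) {ι : Type*} [DecidableEq ι]
    {c : ι → B} (hc : ∀ i, 0 ≤ c i) {s : Finset ι} {i : ι} (hi : i ∉ s)
    (hs : (insert i s : Set ι).Pairwise fun j l ↦ c j * c l = 0) {R : A} (hR : IsSelfAdjoint R)
    {m : ℕ} (hRc : ∀ j ∈ insert i s, π R * c j = c j ^ (m + 1)) :
    ∃ p q : A, IsSelfAdjoint p ∧ IsSelfAdjoint q ∧ p * q = 0 ∧ R ∣ p ∧ R ∣ q ∧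
      π p = c i ^ (4 * m + 2) ∧ ∀ j ∈ s, π q * c j = c j ^ (4 * m + 2 + 1) := by
  have hss : (s : Set ι).Pairwise fun j l ↦ c j * c l = 0 := hs.mono (Set.subset_insert i _)
  have hRcR (j : ι) (hj : j ∈ insert i s) : π R * c j * π R = c j ^ (2 * m + 1) :=
    mul_mul_self_eq_pow (hR.map π) (.of_nonneg (hc j)) (hRc j hj)
  have hRiR := hRcR i (Finset.mem_insert_self i s)
  have hRsR : π R * (∑ j ∈ s, c j) * π R = ∑ j ∈ s, c j ^ (2 * m + 1) := by
    rw [Finset.mul_sum, Finset.sum_mul]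
    exact Finset.sum_congr rfl fun j hj ↦ hRcR j (Finset.mem_insert_of_mem hj)
  have horth : c i ^ (2 * m + 1) * ∑ j ∈ s, c j ^ (2 * m + 1) = 0 := by
    rw [Finset.mul_sum]
    refine Finset.sum_eq_zero fun j hj ↦ ?_
    have hij : c i * c j = 0 := hs (by simp) (by simp [hj]) (ne_of_mem_of_not_mem hj hi).symm
    rw [pow_succ, pow_succ', mul_assoc, ← mul_assoc (c i), hij, zero_mul, mul_zero]
  obtain ⟨p, q, hp, hq, hpq, hRp, hRq, hπp, hπq⟩ := exists_mul_eq_zero_lift_sq hπ hR (hc i)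
    (Finset.sum_nonneg fun j (_ : j ∈ s) ↦ hc j) (by rw [hRiR, hRsR, horth])
  refine ⟨p, q, hp, hq, hpq, hRp, hRq, ?_, fun j hj ↦ ?_⟩
  · rw [hπp, hRiR, ← pow_mul]
    congr 1
    ring
  · rw [hπq, hRsR, sq, mul_assoc, sum_pow_succ_mul hss hj, pow_succ', ← mul_assoc,
      sum_pow_succ_mul hss hj, ← pow_add]
    congr 1
    ring

-- `R` keeps later lifts orthogonal to earlier ones: once `a i` is a right multiple of `p`, every
-- remaining lift is a right multiple of `q`, where `p * q = 0`.
theorem exists_orthogonal_lift_pow (hπ : Function.Surjective π) {ι : Type*} {c : ι → B}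
    (hc : ∀ i, 0 ≤ c i) (s : Finset ι) (hs : (s : Set ι).Pairwise fun i j ↦ c i * c j = 0)
    {R : A} (hR : IsSelfAdjoint R) {m : ℕ} (hRc : ∀ j ∈ s, π R * c j = c j ^ (m + 1)) :
    ∃ (N : ℕ) (a : ι → A), (∀ j ∈ s, R ∣ a j) ∧ (∀ j ∈ s, π (a j) = c j ^ (N + 1)) ∧
      (s : Set ι).Pairwise fun i j ↦ star (a i) * a j = 0 := by
  classical
  induction s using Finset.induction_on generalizing R m with
  | empty => exact ⟨0, 0, by simp⟩
  | insert i s hi ih =>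
    rw [Finset.coe_insert] at hs ⊢
    obtain ⟨p, q, hp, hq, hpq, hRp, hRq, hπp, hπq⟩ :=
      exists_lift_split_insert hπ hc hi hs hR hRc
    obtain ⟨N, a, hqa, ha, horth⟩ := ih (hs.mono (Set.subset_insert i _)) hq hπq
    choose e he using fun j ↦ hπ (c j ^ (4 * m + 2))
    obtain ⟨f, hf⟩ := hπ (c i ^ (N + 1))
    obtain ⟨u, hui, hus⟩ : ∃ u : ι → A, u i = p * f ∧ ∀ j ∈ s, u j = a j * e j :=
      ⟨Function.update (fun j ↦ a j * e j) i (p * f), by simp, fun j hj ↦ by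
        simp [ne_of_mem_of_not_mem hj hi]⟩
    have hpu : p ∣ u i := hui ▸ dvd_mul_right p f
    have hau (j : ι) (hj : j ∈ s) : a j ∣ u j := hus j hj ▸ dvd_mul_right (a j) (e j)
    have hqu (j : ι) (hj : j ∈ s) : q ∣ u j := (hqa j hj).trans (hau j hj)
    refine ⟨4 * m + 2 + N, u, ?_, ?_, pairwise_insert_star_mul_eq_zero (mod_cast hi) ?_
      (by rw [hp.star_eq, hpq]) hpu hqu⟩
    · exact (Finset.forall_mem_insert ..).mpr ⟨hRp.trans hpu, fun j hj ↦ hRq.trans (hqu j hj)⟩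
    · refine (Finset.forall_mem_insert ..).mpr ⟨?_, fun j hj ↦ ?_⟩
      · rw [hui, map_mul, hπp, hf, ← pow_add]
        congr 1
      · rw [hus j hj, map_mul, ha j hj, he, ← pow_add]
        congr 1
        lia
    · exact fun j hj l hl hjl ↦ star_mul_eq_zero_of_dvd (horth hj hl hjl) (hau j hj) (hau l hl)

theorem exists_orthogonal_nonneg_lift (hπ : Function.Surjective π) {ι : Type*} [Finite ι]
    {c : ι → B} (hc : ∀ i, 0 ≤ c i) (horth : Pairwise fun i j ↦ c i * c j = 0) :
    ∃ a : ι → A, (∀ i, 0 ≤ a i) ∧ (Pairwise fun i j ↦ a i * a j = 0) ∧ ∀ i, π (a i) = c i := by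
  cases nonempty_fintype ι
  obtain ⟨N, p, -, hp, hp_orth⟩ := exists_orthogonal_lift_pow hπ hc Finset.univ
    (fun i _ j _ hij ↦ horth hij) (.one A) (m := 0) (by simp)
  choose a ha0 ha using fun i ↦
    exists_nonneg_pow_eq (CFC.abs_nonneg (star (p i))) N.succ_ne_zero
  refine ⟨a, ha0, fun i j hij ↦ ?_, fun i ↦ ?_⟩
  · refine mul_eq_zero_of_pow_mul_pow_eq_zero (ha0 i) (ha0 j) (m := N + 1) (n := N + 1) ?_
    rw [ha, ha]
    exact abs_star_mul_abs_star_eq_zero (hp_orth (by simp) (by simp) hij)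
  · refine eq_of_pow_eq_pow_of_nonneg (map_nonneg π (ha0 i)) (hc i) N.succ_ne_zero ?_
    have hci : 0 ≤ c i ^ (N + 1) := CStarAlgebra.pow_nonneg (hc i) _
    rw [← map_pow, ha, map_cstarAbs, map_star, hp i (Finset.mem_univ i),
      (IsSelfAdjoint.of_nonneg hci).star_eq, CFC.abs_of_nonneg _ hci]

theorem exists_orthogonal_lift_mul_pow (hπ : Function.Surjective π) {ι : Type*} [Fintype ι]
    {z : ι → B} {r : B} (hr : 0 ≤ r) (hz : ∀ i, star (z i) * z i = r ^ 2)
    (horth : Pairwise fun i j ↦ star (z i) * z j = 0) :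
    ∃ (h : A) (w : ι → A), (∀ i, star (w i) * w i = h) ∧
      (Pairwise fun i j ↦ star (w i) * w j = 0) ∧
      ∀ i, π (w i) = z i * r ^ (4 * Fintype.card ι - 1) := by
  obtain ⟨α, hα0, hα_orth, hα⟩ := exists_orthogonal_nonneg_lift hπ (c := fun i ↦ z i * star (z i))
    (fun i ↦ mul_star_self_nonneg (z i)) (fun i j hij ↦ by
      simp only [mul_assoc, ← mul_assoc (star (z i)), horth hij, zero_mul, mul_zero])
  choose T hT using fun i ↦ hπ (z i)
  have hg (i : ι) : π (star (T i) * α i * T i) = r ^ 4 := by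
    rw [map_mul, map_mul, map_star, hα, hT, ← mul_assoc, hz, mul_assoc, hz, ← pow_add]
  obtain ⟨P, hP⟩ := exists_prod_eq_mul_mul (π : A →* B) hg
  choose Y Q m n hPi hY hQ hcard using hP
  refine ⟨P * star P, fun i ↦ CFC.abs (star (α i * T i * Q i)) * star (Y i * star (T i)),
    fun i ↦ ?_, fun i j hij ↦ ?_, fun i ↦ ?_⟩
  · rw [star_mul_self_abs_star_mul_star, hPi i]
    simp only [mul_assoc]
  · refine star_mul_eq_zero_of_dvd ?_ (dvd_mul_right ..) (dvd_mul_right ..)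
    rw [(IsSelfAdjoint.of_nonneg (CFC.abs_nonneg _)).star_eq]
    refine abs_star_mul_abs_star_eq_zero (star_mul_eq_zero_of_dvd (p := α i) (q := α j) ?_
      ?_ ?_)
    · rw [(IsSelfAdjoint.of_nonneg (hα0 i)).star_eq, hα_orth hij]
    · exact (dvd_mul_right ..).mul_right _
    · exact (dvd_mul_right ..).mul_right _
  · have hrsa : star r = r := (IsSelfAdjoint.of_nonneg hr).star_eq
    have hπP : π (α i * T i * Q i) = z i * r ^ (4 * n i + 1 + 1) := by
      have hQi : π (Q i) = r ^ (4 * n i) := (hQ i).trans (pow_mul ..).symm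
      rw [map_mul, map_mul, hα, hT, hQi, mul_assoc (z i), hz, mul_assoc, ← pow_add, add_comm 2]
    have hπV : π (star (Y i * star (T i))) = z i * r ^ (4 * m i) := by
      have hYi : π (Y i) = r ^ (4 * m i) := (hY i).trans (pow_mul ..).symm
      rw [star_mul, star_star, map_mul, hT, map_star, hYi, star_pow, hrsa]
    rw [map_mul, map_cstarAbs, map_star, hπP, abs_star_mul_pow_succ hr (hz i), hπV, mul_assoc,
      ← mul_assoc (star (z i)), hz, mul_assoc, ← pow_add, ← pow_add, ← hcard i]
    congr 2
    lia

theorem exists_orthogonal_lift_of_star_mul_self_eq (hπ : Function.Surjective π) {ι : Type*}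
    [Finite ι] [Nonempty ι] {z : ι → B} {ρ : B} (hz : ∀ i, star (z i) * z i = ρ) (hρ : ‖ρ‖ ≤ 1)
    (horth : Pairwise fun i j ↦ star (z i) * z j = 0) :
    ∃ (h : A) (w : ι → A), ‖h‖ ≤ 1 ∧ (∀ i, star (w i) * w i = h) ∧
      (Pairwise fun i j ↦ star (w i) * w j = 0) ∧ ∀ i, π (w i) = z i := by
  cases nonempty_fintype ι
  have hρ0 : 0 ≤ ρ := hz (Classical.arbitrary ι) ▸ star_mul_self_nonneg _
  obtain ⟨r, hr, hrρ⟩ := exists_nonneg_pow_eq hρ0 (n := 2 * (4 * Fintype.card ι - 1) + 2) (by lia)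
  obtain ⟨u, huu, hu_orth, huz⟩ :=
    exists_orthogonal_eq_mul_pow hr (fun i ↦ (hz i).trans hrρ.symm) horth
  obtain ⟨h, w, hw, hw_orth, hπw⟩ := exists_orthogonal_lift_mul_pow hπ hr huu hu_orth
  have hπwz (i : ι) : π (w i) = z i := (hπw i).trans (huz i)
  have hh : 0 ≤ h := hw (Classical.arbitrary ι) ▸ star_mul_self_nonneg _
  have hπh : π h = ρ := by
    rw [← hw (Classical.arbitrary ι), map_mul, map_star, hπwz, hz]
  obtain ⟨d, hd, hπd, hle⟩ := exists_norm_conjugate_le_one (π := π) hh (hπh ▸ hρ)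
  refine ⟨d * h * d, fun i ↦ w i * d, hle, fun i ↦ ?_, fun i j hij ↦ ?_, fun i ↦ ?_⟩
  · rw [← hw i, star_mul, hd.star_eq]
    simp only [mul_assoc]
  · exact star_mul_eq_zero_of_dvd (hw_orth hij) (dvd_mul_right ..) (dvd_mul_right ..)
  · rw [map_mul, hπwz, hπd, mul_one]

theorem exists_lift_orthogonal_equivalent (hπ : Function.Surjective π) {ι : Type*} [Finite ι]
    {b : ι → B} (hcontr : ∀ i, ‖b i‖ ≤ 1) (horth : Pairwise fun i j ↦ b i * b j = 0)
    (hequiv : ∀ i j, ∃ x : B, b i = star x * x ∧ b j = x * star x) :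
    ∃ a : ι → A, (∀ i, 0 ≤ a i) ∧ (∀ i, ‖a i‖ ≤ 1) ∧ (Pairwise fun i j ↦ a i * a j = 0) ∧
      (∀ i j, ∃ x : A, a i = star x * x ∧ a j = x * star x) ∧ ∀ i, π (a i) = b i := by
  obtain _ | hι := isEmpty_or_nonempty ι
  · exact ⟨0, by simp [Pairwise]⟩
  obtain ⟨i₁⟩ := id hι
  choose x hx hxb using hequiv i₁
  have hb₁ : 0 ≤ b i₁ := hx i₁ ▸ star_mul_self_nonneg _
  obtain ⟨r, hr, hrb⟩ := exists_nonneg_pow_eq hb₁ (n := 4) (by simp)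
  have hx_orth : Pairwise fun i j ↦ star (x i) * x j = 0 := fun i j hij ↦
    star_mul_eq_zero_of_mul_star_mul_mul_star_eq_zero (by rw [← hxb, ← hxb, horth hij])
  obtain ⟨z, hzz, hz_orth, hzx⟩ :=
    exists_orthogonal_eq_mul_pow hr (n := 1) (fun i ↦ (hx i).symm.trans hrb.symm) hx_orth
  have hr_norm : ‖r ^ 2‖ ≤ 1 := by
    have hrsa : IsSelfAdjoint (r ^ 2) := .of_nonneg (CStarAlgebra.pow_nonneg hr 2)
    have hsq : ‖r ^ 2‖ * ‖r ^ 2‖ = ‖b i₁‖ := by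
      rw [← CStarRing.norm_star_mul_self, hrsa.star_eq, ← pow_add, hrb]
    nlinarith [hcontr i₁]
  obtain ⟨h, w, hh, hw, hw_orth, hπw⟩ :=
    exists_orthogonal_lift_of_star_mul_self_eq hπ hzz hr_norm hz_orth
  -- Squaring makes `w j * star (w i)` implement the equivalence of the elements at `i` and `j`.
  refine ⟨fun i ↦ (w i * star (w i)) ^ 2, fun i ↦ ?_, fun i ↦ ?_, fun i j hij ↦ ?_,
    fun i j ↦ ⟨w j * star (w i), ?_, ?_⟩, fun i ↦ ?_⟩
  · exact CStarAlgebra.pow_nonneg (mul_star_self_nonneg _) 2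
  · have hww : ‖w i * star (w i)‖ ≤ 1 := by
      rwa [CStarRing.norm_self_mul_star, ← CStarRing.norm_star_mul_self, hw]
    exact (norm_pow_le' _ two_pos).trans (pow_le_one₀ (norm_nonneg _) hww)
  · have hdvd (l : ι) : w l ∣ (w l * star (w l)) ^ 2 :=
      (dvd_mul_right ..).trans (dvd_pow_self _ two_ne_zero)
    simpa using star_mul_eq_zero_of_dvd (hw_orth hij) (hdvd i) (hdvd j)
  · exact mul_star_self_sq_eq_star_mul_self ((hw j).trans (hw i).symm)
  · simpa using mul_star_self_sq_eq_star_mul_self ((hw i).trans (hw j).symm)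
  · rw [map_pow, map_mul, map_star, hπw, hxb, ← hzx i, pow_one, sq, star_mul,
      (IsSelfAdjoint.of_nonneg hr).star_eq, mul_assoc, ← mul_assoc (star (z i)), hzz, sq]
    simp only [mul_assoc]

theorem lift_orthogonal_equivalent_contractions_general (hπ : Function.Surjective π) {ι : Type*}
    [Finite ι] {b : ι → B} {i₀ i₁ : ι} (h₁₀ : i₁ ≠ i₀) (hcontr : ∀ i, ‖b i‖ ≤ 1)
    (horth : ∀ i j, i ≠ j → i ≠ i₀ → j ≠ i₀ → b i * b j = 0)
    (hequiv : ∀ i j, i ≠ i₀ → j ≠ i₀ → ∃ x : B, b i = star x * x ∧ b j = x * star x)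
    {f : ℝ → ℝ} (hf : Continuous f) (hf₀ : ∀ s, 0 ≤ f s)
    (ht : ∃ t : B, b i₀ = t * cfc f (b i₁) * star t) :
    ∃ a : ι → A, (∀ i, 0 ≤ a i) ∧ (∀ i, ‖a i‖ ≤ 1) ∧
      (∀ i j, i ≠ j → i ≠ i₀ → j ≠ i₀ → a i * a j = 0) ∧
      (∀ i j, i ≠ i₀ → j ≠ i₀ → ∃ x : A, a i = star x * x ∧ a j = x * star x) ∧
      CuntzSub (a i₀) (cfc f (a i₁)) ∧ ∀ i, π (a i) = b i := by
  obtain ⟨c, hc₀, hc_norm, hc_orth, hc_equiv, hπc⟩ := exists_lift_orthogonal_equivalent hπ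
    (b := fun i : {i // i ≠ i₀} ↦ b i) (fun i ↦ hcontr i)
    (fun i j hij ↦ horth i j (Subtype.coe_ne_coe.mpr hij) i.2 j.2)
    (fun i j ↦ hequiv i j i.2 j.2)
  have hcsa : IsSelfAdjoint (c ⟨i₁, h₁₀⟩) := .of_nonneg (hc₀ _)
  have hπcfc : π (cfc f (c ⟨i₁, h₁₀⟩)) = cfc f (b i₁) := by
    rw [StarAlgHomClass.map_cfc π f _ hf.continuousOn (map_continuous π) hcsa (hcsa.map π), hπc]
  have hcfc : 0 ≤ cfc f (c ⟨i₁, h₁₀⟩) := cfc_nonneg fun s _ ↦ hf₀ s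
  obtain ⟨t, ht⟩ := ht
  rw [← hπcfc] at ht
  obtain ⟨y, hπy, hy⟩ := exists_lift_conjugate hπ hcfc (ht ▸ hcontr i₀)
  classical
  obtain ⟨a, ha₀, ha⟩ : ∃ a : ι → A, a i₀ = y * cfc f (c ⟨i₁, h₁₀⟩) * star y ∧
      ∀ i (hi : i ≠ i₀), a i = c ⟨i, hi⟩ :=
    ⟨fun i ↦ if hi : i = i₀ then y * cfc f (c ⟨i₁, h₁₀⟩) * star y else c ⟨i, hi⟩,
      by simp, fun i hi ↦ by simp [hi]⟩
  have forall_of_ne {p : ι → Prop} (h₀ : p i₀) (h : ∀ i, i ≠ i₀ → p i) (i : ι) : p i :=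
    (eq_or_ne i i₀).elim (fun hi ↦ hi ▸ h₀) (h i)
  refine ⟨a, forall_of_ne ?_ fun i hi ↦ ?_, forall_of_ne ?_ fun i hi ↦ ?_, fun i j hij hi hj ↦ ?_,
    fun i j hi hj ↦ ?_, ?_, forall_of_ne ?_ fun i hi ↦ ?_⟩
  · exact ha₀ ▸ star_right_conjugate_nonneg hcfc y
  · exact ha i hi ▸ hc₀ _
  · exact ha₀ ▸ hy
  · exact ha i hi ▸ hc_norm _
  · rw [ha i hi, ha j hj, hc_orth (by simpa using hij)]
  · exact ha i hi ▸ ha j hj ▸ hc_equiv ⟨i, hi⟩ ⟨j, hj⟩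
  · rw [ha₀, ha i₁ h₁₀]
    exact cuntzSub_conjugate _ _
  · rw [ha₀, hπy, ht]
  · rw [ha i hi, hπc]

end CStarAlgebra

/-- Let `π : A → B` be a surjective unital star-algebra homomorphism of
unital C*-algebras, let `k ≥ 2`, and let `b₀, b₁, …, b_k` be positive contractions in `B`
such that `b₁, …, b_k` are pairwise orthogonal and pairwise equivalent,
`b₀ + b₁ + ⋯ + b_k = 1`, and `b₀ = t (b₁ - 1/2)₊ t*` for some `t ∈ B`.  Then there exist
positive contractions `a₀, a₁, …, a_k` in `A` with `a₁, …, a_k` pairwise orthogonal and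
pairwise equivalent, `a₀ ≾ (a₁ - 1/2)₊`, and `π aⱼ = bⱼ` for all `j`. -/
theorem lift_orthogonal_equivalent_contractions {A B : Type*} [CStarAlgebra A]
    [CStarAlgebra B] [PartialOrder A] [StarOrderedRing A] [PartialOrder B]
    [StarOrderedRing B] (π : A →⋆ₐ[ℂ] B) (hsurj : Function.Surjective π)
    (k : ℕ) (hk : 2 ≤ k) (b : Fin (k + 1) → B)
    (hpos : ∀ i, 0 ≤ b i) (hcontr : ∀ i, ‖b i‖ ≤ 1)
    (horth : ∀ i j : Fin (k + 1), i ≠ j → i ≠ 0 → j ≠ 0 → b i * b j = 0)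
    (hequiv : ∀ i j : Fin (k + 1), i ≠ 0 → j ≠ 0 →
      ∃ x : B, b i = star x * x ∧ b j = x * star x)
    (hsum : ∑ i, b i = 1)
    (ht : ∃ t : B, b 0 = t * cfc (fun s : ℝ => max (s - 1 / 2) 0) (b 1) * star t) :
    ∃ a : Fin (k + 1) → A,
      (∀ i, 0 ≤ a i) ∧ (∀ i, ‖a i‖ ≤ 1) ∧
      (∀ i j : Fin (k + 1), i ≠ j → i ≠ 0 → j ≠ 0 → a i * a j = 0) ∧
      (∀ i j : Fin (k + 1), i ≠ 0 → j ≠ 0 →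
        ∃ x : A, a i = star x * x ∧ a j = x * star x) ∧
      CuntzSub (a 0) (cfc (fun s : ℝ => max (s - 1 / 2) 0) (a 1)) ∧
      (∀ i, π (a i) = b i) := by
  exact lift_orthogonal_equivalent_contractions_general hsurj
    (Fin.one_eq_zero_iff.not.mpr (by lia)) hcontr horth hequiv (by fun_prop)
    (fun _ ↦ le_max_right _ _) ht
end
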